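/- For every infinite binary sequence x ∈ B^ℕ, 2·β̄(x) ≤ h̄(x) ≤ H(β̄(x)). -/

import Mathlib

open Filter Topology

/-- The factor of length `len` of the sequence `x` starting at position `i`. -/
def factor (x : ℕ → Bool) (i len : ℕ) : List Bool :=
  List.ofFn (fun j : Fin len => x (i + j))

/-- Number of (possibly overlapping) occurrences of the word `u`
in the prefix `x[0:n)` of the sequence `x`. -/
def occ (x : ℕ → Bool) (n : ℕ) (u : List Bool) : ℕ :=
  ((Finset.range (n + 1 - u.length)).filter (fun i => factor x i u.length = u)).card

/-- Non-aligned `ℓ`-block entropy of the prefix `x[0:n)`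
(logs are base 2, with the convention `0 · log 0 = 0`). -/
noncomputable def hBlock (ℓ : ℕ) (x : ℕ → Bool) (n : ℕ) : ℝ :=
  -(1 / (ℓ : ℝ)) * ∑ u : Fin ℓ → Bool,
    ((occ x n (List.ofFn u) : ℝ) / ((n : ℝ) - ℓ + 1)) *
      Real.logb 2 ((occ x n (List.ofFn u) : ℝ) / ((n : ℝ) - ℓ + 1))

/-- `h̲(x) = lim_{ℓ→∞} liminf_{n→∞} h_ℓ(x[0:n))` (the limit in `ℓ` exists). -/
noncomputable def hLow (x : ℕ → Bool) : ℝ :=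
  atTop.liminf fun ℓ => atTop.liminf fun n => hBlock ℓ x n

/-- `h̄(x) = lim_{ℓ→∞} limsup_{n→∞} h_ℓ(x[0:n))` (the limit in `ℓ` exists). -/
noncomputable def hUp (x : ℕ → Bool) : ℝ :=
  atTop.limsup fun ℓ => atTop.limsup fun n => hBlock ℓ x n

/-- `γ_ℓ(x[0:n))`: normalized minimal number of prediction errors when predicting
`x[i]` from the preceding `ℓ` symbols `x[i-ℓ:i)`, for `i ∈ {ℓ,…,n-1}`. -/
noncomputable def gammaWord (ℓ : ℕ) (x : ℕ → Bool) (n : ℕ) : ℝ :=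
  (1 / ((n : ℝ) - ℓ)) *
    ((Finset.univ : Finset ((Fin ℓ → Bool) → Bool)).inf' Finset.univ_nonempty
      (fun f => ((((Finset.Ico ℓ n).filter
        (fun i => x i ≠ f (fun j => x (i - ℓ + j)))).card : ℝ))))

/-- `β_ℓ(x[0:n))`: normalized minimal number of prediction errors when predicting
`x[i]` from the following `ℓ` symbols `x[i+1:i+ℓ+1)`, for `i ∈ {0,…,n-ℓ-1}`. -/
noncomputable def betaWord (ℓ : ℕ) (x : ℕ → Bool) (n : ℕ) : ℝ :=
  (1 / ((n : ℝ) - ℓ)) *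
    ((Finset.univ : Finset ((Fin ℓ → Bool) → Bool)).inf' Finset.univ_nonempty
      (fun f => ((((Finset.range (n - ℓ)).filter
        (fun i => x i ≠ f (fun j => x (i + 1 + j)))).card : ℝ))))

/-- `γ̲(x) = lim_{ℓ→∞} liminf_{n→∞} γ_ℓ(x[0:n))` (the limit in `ℓ` exists, by monotonicity). -/
noncomputable def gammaLow (x : ℕ → Bool) : ℝ :=
  atTop.liminf fun ℓ => atTop.liminf fun n => gammaWord ℓ x n

/-- `γ̄(x) = lim_{ℓ→∞} limsup_{n→∞} γ_ℓ(x[0:n))` (the limit in `ℓ` exists, by monotonicity). -/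
noncomputable def gammaUp (x : ℕ → Bool) : ℝ :=
  atTop.limsup fun ℓ => atTop.limsup fun n => gammaWord ℓ x n

/-- `β̲(x) = lim_{ℓ→∞} liminf_{n→∞} β_ℓ(x[0:n))` (the limit in `ℓ` exists, by monotonicity). -/
noncomputable def betaLow (x : ℕ → Bool) : ℝ :=
  atTop.liminf fun ℓ => atTop.liminf fun n => betaWord ℓ x n

/-- `β̄(x) = lim_{ℓ→∞} limsup_{n→∞} β_ℓ(x[0:n))` (the limit in `ℓ` exists, by monotonicity). -/
noncomputable def betaUp (x : ℕ → Bool) : ℝ :=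
  atTop.limsup fun ℓ => atTop.limsup fun n => betaWord ℓ x n

/-- Binary Shannon entropy function `H(α) = -α log α - (1-α) log (1-α)` (base-2 logs). -/
noncomputable def binEntropy (a : ℝ) : ℝ :=
  -(a * Real.logb 2 a) - (1 - a) * Real.logb 2 (1 - a)

/-- Conditional block entropy `Hc^{n,ℓ}(x)`:
`-Σ_{ā ∈ B^ℓ, a ∈ B, p(ā·a) > 0} p(ā·a) · log (p(ā·a)/p(ā))`, where
`p(ā) = occ(x[0:n-1), ā)/(n-ℓ)` and `p(ā·a) = occ(x[0:n), ā·a)/(n-ℓ)`. -/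
noncomputable def condEntropy (ℓ : ℕ) (x : ℕ → Bool) (n : ℕ) : ℝ :=
  -∑ u : Fin ℓ → Bool, ∑ a : Bool,
    (if 0 < ((occ x n (List.ofFn u ++ [a]) : ℝ) / ((n : ℝ) - ℓ)) then
      ((occ x n (List.ofFn u ++ [a]) : ℝ) / ((n : ℝ) - ℓ)) *
        Real.logb 2 (((occ x n (List.ofFn u ++ [a]) : ℝ) / ((n : ℝ) - ℓ)) /
          ((occ x (n - 1) (List.ofFn u) : ℝ) / ((n : ℝ) - ℓ)))
    else 0)

/-- The real number in `[0,1]` denoted by the binary sequence `x`. -/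
noncomputable def val (x : ℕ → Bool) : ℝ :=
  ∑' n : ℕ, (if x n then (1 : ℝ) else 0) / 2 ^ (n + 1)

/-!
By the chain rule, the entropy of the `ℓ`-blocks of `x` is the sum over `k < ℓ` of the conditional
entropies `c_k` of a letter given the `k` letters following it, up to shifting the sample of blocks
by one position, whose effect vanishes as the sample grows. Given a context, the conditional entropy
of a letter is `H(p)`, where `p ≤ 1/2` is the proportion of its rarer value, and the best predictor
errs with frequency `p`. Averaging over contexts, the chord bound `2 p ≤ H(p)` and Jensen's
inequality for the concave `H` give `2 β_k ≤ c_k ≤ H(β_k)`.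

As `β_k` decreases in `k`, the mean of `c_k` over `k < ℓ` is at least `2 β_ℓ`; it is at most the
mean of `H(β_k)`, and the Cesàro theorem identifies the limit of the latter.
-/

section Limsup

variable {ι κ R S : Type*} {l : Filter ι} [l.NeBot]

lemma limsup_mem_Icc [ConditionallyCompleteLattice R] {u : ι → R} {a b : R}
    (hu : ∀ i, u i ∈ Set.Icc a b) : limsup u l ∈ Set.Icc a b := by
  have hbelow : l.IsBoundedUnder (· ≥ ·) u := isBoundedUnder_of ⟨a, fun i => (hu i).1⟩
  have habove : l.IsBoundedUnder (· ≤ ·) u := isBoundedUnder_of ⟨b, fun i => (hu i).2⟩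
  exact ⟨le_limsup_of_frequently_le (Frequently.of_forall fun i => (hu i).1) habove,
    limsup_le_of_le hbelow.isCoboundedUnder_le (Eventually.of_forall fun i => (hu i).2)⟩

lemma limsup_mem_Icc_of_tendsto_of_tendsto [ConditionallyCompleteLinearOrder R]
    [TopologicalSpace R] [OrderTopology R] {u v w : ι → R} {a b : R}
    (hu : Tendsto u l (𝓝 a)) (hw : Tendsto w l (𝓝 b)) (huv : u ≤ᶠ[l] v) (hvw : v ≤ᶠ[l] w) :
    limsup v l ∈ Set.Icc a b := by
  have habove : l.IsBoundedUnder (· ≤ ·) v := hw.isBoundedUnder_le.mono_le hvw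
  have hbelow : l.IsBoundedUnder (· ≥ ·) v := hu.isBoundedUnder_ge.mono_ge huv
  rw [← hu.limsup_eq, ← hw.limsup_eq]
  exact ⟨limsup_le_limsup huv hu.isCoboundedUnder_le habove,
    limsup_le_limsup hvw hbelow.isCoboundedUnder_le hw.isBoundedUnder_le⟩

lemma map_limsup_of_monotoneOn_Icc [ConditionallyCompleteLinearOrder R] [TopologicalSpace R]
    [OrderTopology R] [ConditionallyCompleteLinearOrder S] [TopologicalSpace S] [OrderTopology S]
    {f : R → S} {a b : R} (hmono : MonotoneOn f (Set.Icc a b))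
    (hcont : ContinuousOn f (Set.Icc a b)) {u : ι → R} (hu : ∀ i, u i ∈ Set.Icc a b) :
    f (limsup u l) = limsup (fun i => f (u i)) l := by
  obtain ⟨i₀⟩ := l.nonempty_of_neBot
  have hab : a ≤ b := (hu i₀).1.trans (hu i₀).2
  have hbelow : l.IsBoundedUnder (· ≥ ·) u := isBoundedUnder_of ⟨a, fun i => (hu i).1⟩
  have habove : l.IsBoundedUnder (· ≤ ·) u := isBoundedUnder_of ⟨b, fun i => (hu i).2⟩
  let g : R → S := Set.IccExtend hab ((Set.Icc a b).domRestrict f)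
  have hg : ∀ y ∈ Set.Icc a b, g y = f y := fun y hy => Set.IccExtend_of_mem hab _ hy
  have hg_mono : Monotone g :=
    Monotone.IccExtend hab (f := (Set.Icc a b).domRestrict f) fun y z => hmono y.2 z.2
  have hg_cont : Continuous g := hcont.domRestrict.Icc_extend'
  calc f (limsup u l) = g (limsup u l) := (hg _ (limsup_mem_Icc hu)).symm
    _ = limsup (g ∘ u) l := hg_mono.map_limsup_of_continuousAt u hg_cont.continuousAt habove
        hbelow.isCoboundedUnder_le
    _ = limsup (fun i => f (u i)) l := limsup_congr (Eventually.of_forall fun i => hg _ (hu i))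

lemma limsup_sum_le (s : Finset κ) {u : κ → ι → ℝ}
    (habove : ∀ k ∈ s, l.IsBoundedUnder (· ≤ ·) (u k))
    (hbelow : ∀ k ∈ s, l.IsBoundedUnder (· ≥ ·) (u k)) :
    limsup (fun i => ∑ k ∈ s, u k i) l ≤ ∑ k ∈ s, limsup (u k) l := by
  induction s using Finset.cons_induction with
  | empty => simp
  | cons k s hk ih =>
    rw [Finset.forall_mem_cons] at habove hbelow
    have hsum_above := isBoundedUnder_le_sum s habove.2
    have hsum_below := isBoundedUnder_ge_sum s hbelow.2
    simp only [Finset.sum_cons]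
    calc limsup (fun i => u k i + ∑ j ∈ s, u j i) l
        ≤ limsup (u k) l + limsup (fun i => ∑ j ∈ s, u j i) l :=
          limsup_add_le hbelow.1 habove.1
            (by simpa only [Finset.sum_fn] using hsum_below.isCoboundedUnder_le)
            (by simpa only [Finset.sum_fn] using hsum_above)
      _ ≤ limsup (u k) l + ∑ j ∈ s, limsup (u j) l := by
          gcongr
          exact ih habove.2 hbelow.2

lemma limsup_eq_of_tendsto_sub_zero {u v : ι → ℝ} (huv : Tendsto (u - v) l (𝓝 0))
    (habove : l.IsBoundedUnder (· ≤ ·) v) (hbelow : l.IsBoundedUnder (· ≥ ·) v) :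
    limsup u l = limsup v l := by
  have limsup_add_null_le : ∀ {w e : ι → ℝ}, Tendsto e l (𝓝 0) → l.IsBoundedUnder (· ≤ ·) w →
      l.IsBoundedUnder (· ≥ ·) w → limsup (w + e) l ≤ limsup w l := fun he hw hw' =>
    (limsup_add_le hw' hw he.isCoboundedUnder_le he.isBoundedUnder_le).trans_eq
      (by rw [he.limsup_eq, add_zero])
  refine le_antisymm ?_ ?_
  · simpa only [add_sub_cancel] using limsup_add_null_le huv habove hbelow
  · have hvu : Tendsto (v - u) l (𝓝 0) := by
      simpa only [Pi.sub_apply, neg_sub, neg_zero, ← Pi.sub_def] using huv.neg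
    have hu_above : l.IsBoundedUnder (· ≤ ·) u := by
      simpa only [add_sub_cancel] using isBoundedUnder_le_add habove huv.isBoundedUnder_le
    have hu_below : l.IsBoundedUnder (· ≥ ·) u := by
      simpa only [add_sub_cancel] using isBoundedUnder_ge_add hbelow huv.isBoundedUnder_ge
    simpa only [add_sub_cancel] using limsup_add_null_le hvu hu_above hu_below

end Limsup

section BinEntropy

lemma binEntropy_eq_div_log_two (p : ℝ) : binEntropy p = Real.binEntropy p / Real.log 2 := by
  rw [Real.binEntropy_eq_negMulLog_add_negMulLog_one_sub]
  unfold binEntropy Real.negMulLog Real.logb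
  ring

lemma continuous_binEntropy : Continuous binEntropy := by
  simp only [funext binEntropy_eq_div_log_two]
  exact Real.binEntropy_continuous.div_const _

lemma monotoneOn_binEntropy : MonotoneOn binEntropy (Set.Icc 0 2⁻¹) := by
  intro p hp q hq hpq
  simp only [binEntropy_eq_div_log_two]
  gcongr
  exact Real.binEntropy_strictMonoOn.monotoneOn hp hq hpq

lemma concaveOn_binEntropy : ConcaveOn ℝ (Set.Icc 0 1) binEntropy := by
  have h := Real.strictConcave_binEntropy.concaveOn.smul (inv_nonneg.2 (Real.log_nonneg one_le_two))
  simpa only [funext binEntropy_eq_div_log_two, smul_eq_mul, inv_mul_eq_div] using h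

lemma binEntropy_one_sub (p : ℝ) : binEntropy (1 - p) = binEntropy p := by
  simp only [binEntropy_eq_div_log_two, Real.binEntropy_one_sub]

lemma binEntropy_zero : binEntropy 0 = 0 := by
  simp only [binEntropy_eq_div_log_two, Real.binEntropy_zero, zero_div]

lemma binEntropy_two_inv : binEntropy 2⁻¹ = 1 := by
  rw [binEntropy_eq_div_log_two, Real.binEntropy_two_inv, div_self (Real.log_pos one_lt_two).ne']

lemma binEntropy_le_one (p : ℝ) : binEntropy p ≤ 1 := by
  rw [binEntropy_eq_div_log_two]
  exact div_le_one_of_le₀ Real.binEntropy_le_log_two (Real.log_nonneg one_le_two)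

lemma two_mul_le_binEntropy {p : ℝ} (hp : p ∈ Set.Icc 0 2⁻¹) : 2 * p ≤ binEntropy p := by
  have hzero : (0 : ℝ) ∈ Set.Icc 0 1 := by norm_num
  have hhalf : (2⁻¹ : ℝ) ∈ Set.Icc 0 1 := by norm_num
  have hchord := concaveOn_binEntropy.2 hzero hhalf (by linarith [hp.2] : 0 ≤ 1 - 2 * p)
    (by linarith [hp.1] : 0 ≤ 2 * p) (by ring)
  have hp_eq : 2 * p * 2⁻¹ = p := by ring
  simpa only [smul_eq_mul, binEntropy_zero, binEntropy_two_inv, mul_zero, zero_add, mul_one, hp_eq]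
    using hchord

lemma negMulLog_add_negMulLog_div_log_two {a c : ℝ} (ha : 0 ≤ a) (hc : 0 ≤ c) :
    (Real.negMulLog a + Real.negMulLog c) / Real.log 2 =
      Real.negMulLog (a + c) / Real.log 2 + (a + c) * binEntropy (min a c / (a + c)) := by
  rcases (add_nonneg ha hc).eq_or_lt with hzero | hpos
  · obtain ⟨rfl, rfl⟩ := (add_eq_zero_iff_of_nonneg ha hc).1 hzero.symm
    simp
  have hcompl : c / (a + c) = 1 - a / (a + c) := by field_simp; ring
  have hmin : binEntropy (min a c / (a + c)) = binEntropy (a / (a + c)) := by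
    rcases min_choice a c with h | h <;> rw [h]
    rw [hcompl, binEntropy_one_sub]
  have hsplit : ∀ t, Real.negMulLog t = t / (a + c) * Real.negMulLog (a + c) +
      (a + c) * Real.negMulLog (t / (a + c)) := fun t => by
    rw [← Real.negMulLog_mul, mul_div_cancel₀ t hpos.ne']
  rw [hmin, binEntropy_eq_div_log_two, Real.binEntropy_eq_negMulLog_add_negMulLog_one_sub,
    ← hcompl, hsplit a, hsplit c]
  field_simp
  ring

end BinEntropy

section Empirical

variable {ι α β : Type*} [DecidableEq α] [DecidableEq β]

/-- The empirical distribution of the observable `X` over the finite sample `s`: the proportion of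
`i ∈ s` with `X i = a`. It is identically `0` when `s` is empty. -/
noncomputable def empiricalFreq (s : Finset ι) (X : ι → α) (a : α) : ℝ :=
  ((s.filter fun i => X i = a).card : ℝ) / s.card

/-- The Shannon entropy, in bits, of the empirical distribution of `X` over `s`. -/
noncomputable def empiricalEntropy [Fintype α] (s : Finset ι) (X : ι → α) : ℝ :=
  (∑ a, Real.negMulLog (empiricalFreq s X a)) / Real.log 2

/-- The empirical conditional entropy `H(Y | X)` over `s`, in bits, defined through the chain rule
`H(Y | X) = H(Y, X) - H(X)`. -/
noncomputable def empiricalCondEntropy [Fintype α] [Fintype β] (s : Finset ι) (Y : ι → β)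
    (X : ι → α) : ℝ :=
  empiricalEntropy s (fun i => (Y i, X i)) - empiricalEntropy s X

/-- The proportion of `i ∈ s` at which the rule `f` fails to predict the bit `Y i` from `X i`. -/
noncomputable def errorRate (s : Finset ι) (Y : ι → Bool) (X : ι → α) (f : α → Bool) : ℝ :=
  ((s.filter fun i => Y i ≠ f (X i)).card : ℝ) / s.card

/-- The least error rate over `s` of a rule predicting the bit `Y` from `X`. -/
noncomputable def predictionError [Fintype α] (s : Finset ι) (Y : ι → Bool) (X : ι → α) : ℝ :=
  (Finset.univ : Finset (α → Bool)).inf' Finset.univ_nonempty (errorRate s Y X)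

/-- The proportion of `i ∈ s` at which `X i = a` and `Y i` is the rarer of the two values that `Y`
takes jointly with `X = a`. -/
noncomputable def minorityFreq (s : Finset ι) (Y : ι → Bool) (X : ι → α) (a : α) : ℝ :=
  min (empiricalFreq s (fun i => (Y i, X i)) (true, a))
    (empiricalFreq s (fun i => (Y i, X i)) (false, a))

lemma empiricalFreq_mem_Icc (s : Finset ι) (X : ι → α) (a : α) :
    empiricalFreq s X a ∈ Set.Icc 0 1 := by
  refine ⟨by unfold empiricalFreq; positivity, div_le_one_of_le₀ ?_ (by positivity)⟩
  exact_mod_cast Finset.card_filter_le _ _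

lemma sum_empiricalFreq [Fintype α] {s : Finset ι} (hs : s.Nonempty) (X : ι → α) :
    ∑ a, empiricalFreq s X a = 1 := by
  have hcard : (s.card : ℝ) ≠ 0 := by exact_mod_cast hs.card_ne_zero
  simp only [empiricalFreq, ← Finset.sum_div, ← Nat.cast_sum]
  rw [← Finset.card_eq_sum_card_fiberwise fun _ _ => Finset.mem_coe.2 (Finset.mem_univ _),
    div_self hcard]

lemma sum_empiricalFreq_prodMk [Fintype β] (s : Finset ι) (Y : ι → β) (X : ι → α) (a : α) :
    ∑ b, empiricalFreq s (fun i => (Y i, X i)) (b, a) = empiricalFreq s X a := by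
  simp only [empiricalFreq, ← Finset.sum_div, ← Nat.cast_sum]
  rw [Finset.card_eq_sum_card_fiberwise (f := Y) (s := s.filter fun i => X i = a)
    (t := Finset.univ) fun _ _ => Finset.mem_coe.2 (Finset.mem_univ _)]
  simp only [Finset.filter_filter, Prod.mk.injEq, and_comm]

lemma empiricalFreq_equiv_comp (e : α ≃ β) (s : Finset ι) (X : ι → α) (a : α) :
    empiricalFreq s (fun i => e (X i)) (e a) = empiricalFreq s X a := by
  simp only [empiricalFreq, e.apply_eq_iff_eq]

lemma empiricalEntropy_equiv_comp [Fintype α] [Fintype β] (e : α ≃ β) (s : Finset ι) (X : ι → α) :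
    empiricalEntropy s (fun i => e (X i)) = empiricalEntropy s X := by
  simp only [empiricalEntropy, ← e.sum_comp, empiricalFreq_equiv_comp]

lemma empiricalEntropy_of_subsingleton [Fintype α] [Subsingleton α] (s : Finset ι) (X : ι → α) :
    empiricalEntropy s X = 0 := by
  have hfreq : ∀ a, empiricalFreq s X a = 0 ∨ empiricalFreq s X a = 1 := fun a => by
    simp only [empiricalFreq, Subsingleton.elim _ a, Finset.filter_true]
    exact (eq_or_ne _ _).imp (fun h => by simp [h]) div_self
  have hterm : ∀ a, Real.negMulLog (empiricalFreq s X a) = 0 := fun a => by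
    rcases hfreq a with h | h <;> simp [h]
  simp only [empiricalEntropy, hterm, Finset.sum_const_zero, zero_div]

lemma minorityFreq_nonneg (s : Finset ι) (Y : ι → Bool) (X : ι → α) (a : α) :
    0 ≤ minorityFreq s Y X a :=
  le_min (empiricalFreq_mem_Icc ..).1 (empiricalFreq_mem_Icc ..).1

lemma two_mul_minorityFreq_le (s : Finset ι) (Y : ι → Bool) (X : ι → α) (a : α) :
    2 * minorityFreq s Y X a ≤ empiricalFreq s X a := by
  rw [← sum_empiricalFreq_prodMk s Y, Fintype.sum_bool, two_mul]
  exact add_le_add (min_le_left ..) (min_le_right ..)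

lemma minorityFreq_div_mem_Icc (s : Finset ι) (Y : ι → Bool) (X : ι → α) (a : α) :
    minorityFreq s Y X a / empiricalFreq s X a ∈ Set.Icc 0 2⁻¹ := by
  have hq := (empiricalFreq_mem_Icc s X a).1
  refine ⟨div_nonneg (minorityFreq_nonneg ..) hq, div_le_of_le_mul₀ hq (by norm_num) ?_⟩
  linarith [two_mul_minorityFreq_le s Y X a]

lemma empiricalFreq_mul_minorityFreq_div (s : Finset ι) (Y : ι → Bool) (X : ι → α) (a : α) :
    empiricalFreq s X a * (minorityFreq s Y X a / empiricalFreq s X a) = minorityFreq s Y X a :=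
  mul_div_cancel_of_imp' fun h => by
    linarith [two_mul_minorityFreq_le s Y X a, minorityFreq_nonneg s Y X a]

variable [Fintype α]

lemma errorRate_eq_sum (s : Finset ι) (Y : ι → Bool) (X : ι → α) (f : α → Bool) :
    errorRate s Y X f = ∑ a, empiricalFreq s (fun i => (Y i, X i)) (!f a, a) := by
  have hfiber : ∀ a, (s.filter fun i => Y i ≠ f (X i)).filter (fun i => X i = a) =
      s.filter fun i => (Y i, X i) = (!f a, a) := fun a => by
    ext i
    simp only [Finset.mem_filter, Prod.mk.injEq, Bool.eq_not]
    grind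
  simp only [errorRate, empiricalFreq, ← hfiber, ← Finset.sum_div, ← Nat.cast_sum]
  rw [Finset.card_eq_sum_card_fiberwise (f := X) (t := Finset.univ)
    fun _ _ => Finset.mem_coe.2 (Finset.mem_univ _)]

lemma predictionError_le_errorRate (s : Finset ι) (Y : ι → Bool) (X : ι → α) (f : α → Bool) :
    predictionError s Y X ≤ errorRate s Y X f :=
  Finset.inf'_le _ (Finset.mem_univ f)

lemma exists_errorRate_eq_predictionError (s : Finset ι) (Y : ι → Bool) (X : ι → α) :
    ∃ f, errorRate s Y X f = predictionError s Y X := by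
  obtain ⟨f, -, hf⟩ :=
    Finset.exists_mem_eq_inf' (Finset.univ_nonempty (α := α → Bool)) (errorRate s Y X)
  exact ⟨f, hf.symm⟩

lemma predictionError_eq_sum_minorityFreq (s : Finset ι) (Y : ι → Bool) (X : ι → α) :
    predictionError s Y X = ∑ a, minorityFreq s Y X a := by
  apply le_antisymm
  · have hmajority : ∀ a, ∃ b : Bool,
        empiricalFreq s (fun i => (Y i, X i)) (!b, a) = minorityFreq s Y X a := fun a =>
      (min_choice _ _).elim (fun h => ⟨false, h.symm⟩) (fun h => ⟨true, h.symm⟩)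
    choose f hf using hmajority
    simpa only [errorRate_eq_sum, hf] using predictionError_le_errorRate s Y X f
  · obtain ⟨f, hf⟩ := exists_errorRate_eq_predictionError s Y X
    rw [← hf, errorRate_eq_sum]
    refine Finset.sum_le_sum fun a _ => ?_
    cases f a
    · exact min_le_left ..
    · exact min_le_right ..

lemma predictionError_le_comp {γ : Type*} [DecidableEq γ] [Fintype γ] (g : α → γ) (s : Finset ι)
    (Y : ι → Bool) (X : ι → α) :
    predictionError s Y X ≤ predictionError s Y fun i => g (X i) := by
  obtain ⟨f, hf⟩ := exists_errorRate_eq_predictionError s Y fun i => g (X i)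
  rw [← hf]
  exact predictionError_le_errorRate s Y X fun a => f (g a)

lemma predictionError_mem_Icc (s : Finset ι) (Y : ι → Bool) (X : ι → α) :
    predictionError s Y X ∈ Set.Icc 0 2⁻¹ := by
  rw [predictionError_eq_sum_minorityFreq]
  refine ⟨Finset.sum_nonneg fun a _ => minorityFreq_nonneg s Y X a, ?_⟩
  rcases s.eq_empty_or_nonempty with rfl | hs
  · simp [minorityFreq, empiricalFreq]
  have hdouble : 2 * ∑ a, minorityFreq s Y X a ≤ 1 := by
    rw [Finset.mul_sum, ← sum_empiricalFreq hs X]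
    exact Finset.sum_le_sum fun a _ => two_mul_minorityFreq_le s Y X a
  linarith

lemma empiricalCondEntropy_eq_sum (s : Finset ι) (Y : ι → Bool) (X : ι → α) :
    empiricalCondEntropy s Y X = ∑ a, empiricalFreq s X a *
      binEntropy (minorityFreq s Y X a / empiricalFreq s X a) := by
  have hterm : ∀ a, (∑ b, Real.negMulLog (empiricalFreq s (fun i => (Y i, X i)) (b, a))) /
      Real.log 2 = Real.negMulLog (empiricalFreq s X a) / Real.log 2 +
        empiricalFreq s X a * binEntropy (minorityFreq s Y X a / empiricalFreq s X a) := by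
    intro a
    rw [← sum_empiricalFreq_prodMk s Y X a, Fintype.sum_bool, Fintype.sum_bool, minorityFreq]
    exact negMulLog_add_negMulLog_div_log_two (empiricalFreq_mem_Icc ..).1
      (empiricalFreq_mem_Icc ..).1
  rw [empiricalCondEntropy, empiricalEntropy, empiricalEntropy, Fintype.sum_prod_type_right,
    Finset.sum_div, Finset.sum_div]
  simp only [hterm, Finset.sum_add_distrib, add_sub_cancel_left]

lemma two_mul_predictionError_le_empiricalCondEntropy (s : Finset ι) (Y : ι → Bool)
    (X : ι → α) : 2 * predictionError s Y X ≤ empiricalCondEntropy s Y X := by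
  rw [predictionError_eq_sum_minorityFreq, empiricalCondEntropy_eq_sum, Finset.mul_sum]
  refine Finset.sum_le_sum fun a _ => ?_
  calc 2 * minorityFreq s Y X a
      = empiricalFreq s X a * (2 * (minorityFreq s Y X a / empiricalFreq s X a)) := by
        rw [mul_left_comm, empiricalFreq_mul_minorityFreq_div]
    _ ≤ empiricalFreq s X a * binEntropy (minorityFreq s Y X a / empiricalFreq s X a) :=
        mul_le_mul_of_nonneg_left (two_mul_le_binEntropy (minorityFreq_div_mem_Icc s Y X a))
          (empiricalFreq_mem_Icc s X a).1

lemma empiricalCondEntropy_le_binEntropy_predictionError (s : Finset ι) (Y : ι → Bool)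
    (X : ι → α) : empiricalCondEntropy s Y X ≤ binEntropy (predictionError s Y X) := by
  rw [predictionError_eq_sum_minorityFreq, empiricalCondEntropy_eq_sum]
  rcases s.eq_empty_or_nonempty with rfl | hs
  · simp [minorityFreq, empiricalFreq, binEntropy_zero]
  have hjensen := concaveOn_binEntropy.le_map_sum (t := Finset.univ) (w := empiricalFreq s X)
    (p := fun a => minorityFreq s Y X a / empiricalFreq s X a)
    (fun a _ => (empiricalFreq_mem_Icc s X a).1) (sum_empiricalFreq hs X)
    fun a _ => Set.Icc_subset_Icc_right (by norm_num) (minorityFreq_div_mem_Icc s Y X a)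
  simpa only [smul_eq_mul, empiricalFreq_mul_minorityFreq_div] using hjensen

end Empirical

section Shift

variable {α : Type*} [DecidableEq α]

lemma tendsto_empiricalFreq_shift_sub (X : ℕ → α) (a : α) :
    Tendsto (fun N => empiricalFreq (Finset.range N) (fun i => X (i + 1)) a -
      empiricalFreq (Finset.range N) X a) atTop (𝓝 0) := by
  let c : ℕ → ℝ := fun i => if X i = a then 1 else 0
  have htelescope : ∀ N, empiricalFreq (Finset.range N) (fun i => X (i + 1)) a -
      empiricalFreq (Finset.range N) X a = (c N - c 0) / N := fun N => by
    simp only [empiricalFreq, Finset.natCast_card_filter, ← sub_div, ← Finset.sum_sub_distrib,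
      Finset.card_range]
    rw [Finset.sum_range_sub c]
  have hc : ∀ i, c i ∈ Set.Icc 0 1 := fun i => by
    by_cases h : X i = a <;> simp [c, h]
  refine squeeze_zero_norm (fun N => ?_) tendsto_one_div_atTop_nhds_zero_nat
  rw [htelescope, norm_div, Real.norm_natCast]
  gcongr
  exact Real.dist_le_of_mem_Icc_01 (hc N) (hc 0)

lemma tendsto_comp_sub_comp_of_isCompact {ι E F : Type*} {l : Filter ι} [AddCommGroup E]
    [UniformSpace E] [IsUniformAddGroup E] [AddCommGroup F] [UniformSpace F] [IsUniformAddGroup F]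
    {K : Set E} {f : E → F} (hK : IsCompact K) (hf : ContinuousOn f K) {u v : ι → E}
    (hu : ∀ i, u i ∈ K) (hv : ∀ i, v i ∈ K) (huv : Tendsto (fun i => u i - v i) l (𝓝 0)) :
    Tendsto (fun i => f (u i) - f (v i)) l (𝓝 0) := by
  have hunif : UniformContinuousOn f K := hK.uniformContinuousOn_of_continuous hf
  have hmem : Tendsto (fun i => (v i, u i)) l (𝓟 (K ×ˢ K)) :=
    tendsto_principal.2 (Eventually.of_forall fun i => ⟨hv i, hu i⟩)
  rw [UniformContinuousOn, uniformity_eq_comap_nhds_zero E,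
    uniformity_eq_comap_nhds_zero F] at hunif
  exact tendsto_comap_iff.1 (hunif.comp (tendsto_inf.2 ⟨tendsto_comap_iff.2 huv, hmem⟩))

lemma tendsto_empiricalEntropy_shift_sub [Fintype α] (X : ℕ → α) :
    Tendsto (fun N => empiricalEntropy (Finset.range N) (fun i => X (i + 1)) -
      empiricalEntropy (Finset.range N) X) atTop (𝓝 0) := by
  have hterm : ∀ a, Tendsto
      (fun N => Real.negMulLog (empiricalFreq (Finset.range N) (fun i => X (i + 1)) a) -
        Real.negMulLog (empiricalFreq (Finset.range N) X a)) atTop (𝓝 0) := fun a =>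
    tendsto_comp_sub_comp_of_isCompact isCompact_Icc Real.continuous_negMulLog.continuousOn
      (fun _ => empiricalFreq_mem_Icc ..) (fun _ => empiricalFreq_mem_Icc ..)
      (tendsto_empiricalFreq_shift_sub X a)
  have hsum := (tendsto_finsetSum Finset.univ fun a _ => hterm a).div_const (Real.log 2)
  simpa only [empiricalEntropy, ← sub_div, ← Finset.sum_sub_distrib, Finset.sum_const_zero,
    zero_div] using hsum

end Shift

section Block

variable {A : Type*}

/-- The block `x[i:i+ℓ)`, as a function on `Fin ℓ`. -/
def block (x : ℕ → A) (ℓ i : ℕ) : Fin ℓ → A := fun j => x (i + j)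

lemma block_succ (x : ℕ → A) (ℓ i : ℕ) :
    block x (ℓ + 1) i = Fin.consEquiv (fun _ => A) (x i, block x ℓ (i + 1)) := by
  funext j
  refine Fin.cases rfl (fun j => ?_) j
  simp only [block, Fin.consEquiv, Equiv.coe_fn_mk, Fin.cons_succ, Fin.val_succ]
  congr 1
  omega

variable [Fintype A] [DecidableEq A]

/-- The entropy, in bits, of the `ℓ`-blocks of `x` starting at the positions `0, …, N - 1`. -/
noncomputable def blockEntropy (x : ℕ → A) (ℓ N : ℕ) : ℝ :=
  empiricalEntropy (Finset.range N) (block x ℓ)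

/-- The conditional entropy, in bits, of a letter `x i` given the `k` letters following it, over
the positions `i < N`. -/
noncomputable def letterCondEntropy (x : ℕ → A) (k N : ℕ) : ℝ :=
  empiricalCondEntropy (Finset.range N) x fun i => block x k (i + 1)

lemma blockEntropy_succ (x : ℕ → A) (ℓ N : ℕ) :
    blockEntropy x (ℓ + 1) N =
      empiricalEntropy (Finset.range N) (fun i => block x ℓ (i + 1)) + letterCondEntropy x ℓ N := by
  simp only [blockEntropy, letterCondEntropy, empiricalCondEntropy, add_sub_cancel,
    funext (block_succ x ℓ), empiricalEntropy_equiv_comp]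

lemma tendsto_blockEntropy_sub_sum_letterCondEntropy (x : ℕ → A) (ℓ : ℕ) :
    Tendsto (fun N => blockEntropy x ℓ N - ∑ k ∈ Finset.range ℓ, letterCondEntropy x k N)
      atTop (𝓝 0) := by
  induction ℓ with
  | zero => simp [blockEntropy, empiricalEntropy_of_subsingleton]
  | succ ℓ ih =>
    have hshift := (tendsto_empiricalEntropy_shift_sub (block x ℓ)).add ih
    rw [add_zero] at hshift
    refine hshift.congr fun N => ?_
    rw [blockEntropy_succ, Finset.sum_range_succ, blockEntropy]
    ring

end Block

section BinarySequence

variable (x : ℕ → Bool)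

/-- The least proportion of errors in predicting a letter `x i` from the `k` letters following it,
over the positions `i < N`. -/
noncomputable def letterPredictionError (k N : ℕ) : ℝ :=
  predictionError (Finset.range N) x fun i => block x k (i + 1)

lemma letterPredictionError_mem_Icc (k N : ℕ) : letterPredictionError x k N ∈ Set.Icc 0 2⁻¹ :=
  predictionError_mem_Icc ..

lemma antitone_letterPredictionError (N : ℕ) : Antitone fun k => letterPredictionError x k N := by
  intro k m hkm
  let truncate : (Fin m → Bool) → Fin k → Bool := fun u j => u (Fin.castLE hkm j)
  exact predictionError_le_comp truncate (Finset.range N) x fun i => block x m (i + 1)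

lemma two_mul_letterPredictionError_le (k N : ℕ) :
    2 * letterPredictionError x k N ≤ letterCondEntropy x k N :=
  two_mul_predictionError_le_empiricalCondEntropy ..

lemma letterCondEntropy_le (k N : ℕ) :
    letterCondEntropy x k N ≤ binEntropy (letterPredictionError x k N) :=
  empiricalCondEntropy_le_binEntropy_predictionError ..

lemma hBlock_add (ℓ n : ℕ) : hBlock ℓ x (n + ℓ) = (ℓ : ℝ)⁻¹ * blockEntropy x ℓ (n + 1) := by
  have hfreq : ∀ u : Fin ℓ → Bool,
      (occ x (n + ℓ) (List.ofFn u) : ℝ) / (((n + ℓ : ℕ) : ℝ) - ℓ + 1) =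
        empiricalFreq (Finset.range (n + 1)) (block x ℓ) u := by
    intro u
    have hpositions : n + ℓ + 1 - ℓ = n + 1 := by omega
    have hlength : ((n + ℓ : ℕ) : ℝ) - ℓ + 1 = (n + 1 : ℕ) := by push_cast; ring
    simp only [occ, factor, empiricalFreq, List.length_ofFn, hpositions, hlength,
      Finset.card_range, List.ofFn_inj]
    rfl
  simp only [hBlock, hfreq, blockEntropy, empiricalEntropy, Real.negMulLog, Real.logb,
    Finset.sum_div, Finset.mul_sum]
  exact Finset.sum_congr rfl fun u _ => by ring

lemma betaWord_add (ℓ n : ℕ) : betaWord ℓ x (n + ℓ) = letterPredictionError x ℓ n := by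
  have hn : (0 : ℝ) ≤ 1 / n := by positivity
  simp only [betaWord, letterPredictionError, predictionError, Nat.add_sub_cancel,
    Nat.cast_add, add_sub_cancel_right]
  rw [Finset.apply_inf'_eq_inf'_comp _ (fun t : ℝ => 1 / (n : ℝ) * t)
    fun a b => mul_min_of_nonneg a b hn]
  refine Finset.inf'_congr _ rfl fun f _ => ?_
  rw [errorRate, Finset.card_range, Function.comp_apply, one_div_mul_eq_div]
  rfl

lemma letterCondEntropy_mem_Icc (k N : ℕ) : letterCondEntropy x k N ∈ Set.Icc 0 1 := by
  have hβ := (letterPredictionError_mem_Icc x k N).1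
  exact ⟨by linarith [two_mul_letterPredictionError_le x k N],
    (letterCondEntropy_le x k N).trans (binEntropy_le_one _)⟩

lemma mean_letterCondEntropy_mem_Icc (ℓ N : ℕ) :
    (ℓ : ℝ)⁻¹ * ∑ k ∈ Finset.range ℓ, letterCondEntropy x k N ∈ Set.Icc 0 1 := by
  have hnonneg : 0 ≤ ∑ k ∈ Finset.range ℓ, letterCondEntropy x k N :=
    Finset.sum_nonneg fun k _ => (letterCondEntropy_mem_Icc x k N).1
  have hle : ∑ k ∈ Finset.range ℓ, letterCondEntropy x k N ≤ ℓ := by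
    simpa only [Finset.card_range, nsmul_eq_mul, mul_one] using
      Finset.sum_le_card_nsmul (Finset.range ℓ) _ 1 fun k _ => (letterCondEntropy_mem_Icc x k N).2
  rw [inv_mul_eq_div]
  exact ⟨by positivity, div_le_one_of_le₀ hle ℓ.cast_nonneg⟩

lemma two_mul_letterPredictionError_le_mean {ℓ : ℕ} (hℓ : ℓ ≠ 0) (N : ℕ) :
    2 * letterPredictionError x ℓ N ≤
      (ℓ : ℝ)⁻¹ * ∑ k ∈ Finset.range ℓ, letterCondEntropy x k N := by
  have hterm : ∀ k ∈ Finset.range ℓ, 2 * letterPredictionError x ℓ N ≤ letterCondEntropy x k N :=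
    fun k hk => (mul_le_mul_of_nonneg_left
      (antitone_letterPredictionError x N (Finset.mem_range.1 hk).le) zero_le_two).trans
        (two_mul_letterPredictionError_le x k N)
  rw [le_inv_mul_iff₀ (by positivity)]
  simpa only [Finset.card_range, nsmul_eq_mul] using Finset.card_nsmul_le_sum _ _ _ hterm

lemma limsup_hBlock (ℓ : ℕ) :
    limsup (fun n => hBlock ℓ x n) atTop =
      limsup (fun N => (ℓ : ℝ)⁻¹ * ∑ k ∈ Finset.range ℓ, letterCondEntropy x k N) atTop := by
  have hdiff := (tendsto_blockEntropy_sub_sum_letterCondEntropy x ℓ).const_mul (ℓ : ℝ)⁻¹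
  simp only [mul_sub, mul_zero] at hdiff
  calc limsup (fun n => hBlock ℓ x n) atTop
      = limsup (fun n => (ℓ : ℝ)⁻¹ * blockEntropy x ℓ (n + 1)) atTop := by
        rw [← limsup_nat_add _ ℓ]
        simp only [hBlock_add]
    _ = limsup (fun N => (ℓ : ℝ)⁻¹ * blockEntropy x ℓ N) atTop :=
        limsup_nat_add (fun N => (ℓ : ℝ)⁻¹ * blockEntropy x ℓ N) 1
    _ = limsup (fun N => (ℓ : ℝ)⁻¹ * ∑ k ∈ Finset.range ℓ, letterCondEntropy x k N) atTop :=
        limsup_eq_of_tendsto_sub_zero hdiff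
          (isBoundedUnder_of ⟨1, fun N => (mean_letterCondEntropy_mem_Icc x ℓ N).2⟩)
          (isBoundedUnder_of ⟨0, fun N => (mean_letterCondEntropy_mem_Icc x ℓ N).1⟩)

lemma limsup_betaWord (ℓ : ℕ) :
    limsup (fun n => betaWord ℓ x n) atTop = limsup (letterPredictionError x ℓ) atTop := by
  rw [← limsup_nat_add _ ℓ]
  simp only [betaWord_add]

lemma two_mul_limsup_betaWord_le {ℓ : ℕ} (hℓ : ℓ ≠ 0) :
    2 * limsup (fun n => betaWord ℓ x n) atTop ≤ limsup (fun n => hBlock ℓ x n) atTop := by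
  have hdouble : Monotone fun t : ℝ => 2 * t := monotone_mul_left_of_nonneg zero_le_two
  rw [limsup_betaWord, limsup_hBlock,
    map_limsup_of_monotoneOn_Icc (hdouble.monotoneOn _) (by fun_prop)
      (letterPredictionError_mem_Icc x ℓ)]
  refine limsup_le_limsup (Eventually.of_forall (two_mul_letterPredictionError_le_mean x hℓ))
    (IsBoundedUnder.isCoboundedUnder_le (isBoundedUnder_of ⟨0, fun N => ?_⟩))
    (isBoundedUnder_of ⟨1, fun N => (mean_letterCondEntropy_mem_Icc x ℓ N).2⟩)
  exact mul_nonneg zero_le_two (letterPredictionError_mem_Icc x ℓ N).1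

lemma limsup_letterCondEntropy_le (k : ℕ) :
    limsup (letterCondEntropy x k) atTop ≤
      binEntropy (limsup (fun n => betaWord k x n) atTop) := by
  rw [limsup_betaWord, map_limsup_of_monotoneOn_Icc monotoneOn_binEntropy
    continuous_binEntropy.continuousOn (letterPredictionError_mem_Icc x k)]
  exact limsup_le_limsup (Eventually.of_forall (letterCondEntropy_le x k))
    (IsBoundedUnder.isCoboundedUnder_le
      (isBoundedUnder_of ⟨0, fun N => (letterCondEntropy_mem_Icc x k N).1⟩))
    (isBoundedUnder_of ⟨1, fun N => binEntropy_le_one _⟩)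

lemma limsup_hBlock_le (ℓ : ℕ) :
    limsup (fun n => hBlock ℓ x n) atTop ≤
      (ℓ : ℝ)⁻¹ * ∑ k ∈ Finset.range ℓ, binEntropy (limsup (fun n => betaWord k x n) atTop) := by
  have hscale : Monotone fun t : ℝ => (ℓ : ℝ)⁻¹ * t := monotone_mul_left_of_nonneg (by positivity)
  have hterm : ∀ k, limsup (fun N => (ℓ : ℝ)⁻¹ * letterCondEntropy x k N) atTop =
      (ℓ : ℝ)⁻¹ * limsup (letterCondEntropy x k) atTop := fun k =>
    (map_limsup_of_monotoneOn_Icc (hscale.monotoneOn _) (by fun_prop)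
      (letterCondEntropy_mem_Icc x k)).symm
  have hmem : ∀ k N, (ℓ : ℝ)⁻¹ * letterCondEntropy x k N ∈
      Set.Icc ((ℓ : ℝ)⁻¹ * 0) ((ℓ : ℝ)⁻¹ * 1) := fun k N =>
    ⟨hscale (letterCondEntropy_mem_Icc x k N).1, hscale (letterCondEntropy_mem_Icc x k N).2⟩
  rw [limsup_hBlock]
  simp only [Finset.mul_sum]
  calc limsup (fun N => ∑ k ∈ Finset.range ℓ, (ℓ : ℝ)⁻¹ * letterCondEntropy x k N) atTop
      ≤ ∑ k ∈ Finset.range ℓ, limsup (fun N => (ℓ : ℝ)⁻¹ * letterCondEntropy x k N) atTop :=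
        limsup_sum_le _ (fun k _ => isBoundedUnder_of ⟨_, fun N => (hmem k N).2⟩)
          fun k _ => isBoundedUnder_of ⟨_, fun N => (hmem k N).1⟩
    _ ≤ ∑ k ∈ Finset.range ℓ,
          (ℓ : ℝ)⁻¹ * binEntropy (limsup (fun n => betaWord k x n) atTop) :=
        Finset.sum_le_sum fun k _ =>
          (hterm k).trans_le (hscale (limsup_letterCondEntropy_le x k))

lemma tendsto_limsup_betaWord :
    Tendsto (fun ℓ => limsup (fun n => betaWord ℓ x n) atTop) atTop (𝓝 (betaUp x)) := by
  have hmem : ∀ ℓ, limsup (letterPredictionError x ℓ) atTop ∈ Set.Icc 0 2⁻¹ :=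
    fun ℓ => limsup_mem_Icc (letterPredictionError_mem_Icc x ℓ)
  have hanti : Antitone fun ℓ => limsup (letterPredictionError x ℓ) atTop := fun k m hkm =>
    limsup_le_limsup (Eventually.of_forall fun N => antitone_letterPredictionError x N hkm)
      (IsBoundedUnder.isCoboundedUnder_le
        (isBoundedUnder_of ⟨0, fun N => (letterPredictionError_mem_Icc x m N).1⟩))
      (isBoundedUnder_of ⟨2⁻¹, fun N => (letterPredictionError_mem_Icc x k N).2⟩)
  have hlim := tendsto_atTop_ciInf hanti ⟨0, Set.forall_mem_range.2 fun ℓ => (hmem ℓ).1⟩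
  simp only [betaUp, limsup_betaWord]
  exact hlim.limsup_eq.symm ▸ hlim

end BinarySequence

theorem rauzy_upper_beta_limsup (x : ℕ → Bool) :
    2 * betaUp x ≤ hUp x ∧ hUp x ≤ binEntropy (betaUp x) := by
  have hβ := tendsto_limsup_betaWord x
  have hcesaro := ((continuous_binEntropy.tendsto (betaUp x)).comp hβ).cesaro
  refine limsup_mem_Icc_of_tendsto_of_tendsto (hβ.const_mul 2) hcesaro ?_ ?_
  · filter_upwards [eventually_ne_atTop 0] with ℓ hℓ
    exact two_mul_limsup_betaWord_le x hℓ
  · exact Eventually.of_forall (limsup_hBlock_le x)
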